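/- For every n ≥ 1, the hexatag linearization hexatags restricts to a bijection between the set of binary head trees with n leaves and the set of valid hexatag lists of length 2n − 1. -/

import Mathlib

/-- Binary head trees (BHTs). -/
inductive BHT : Type where
  | leaf : BHT
  | nodeL (l r : BHT) : BHT
  | nodeR (l r : BHT) : BHT

/-- Number of leaves of a BHT. -/
def BHT.numLeaves : BHT → ℕ
  | .leaf => 1
  | .nodeL l r => l.numLeaves + r.numLeaves
  | .nodeR l r => l.numLeaves + r.numLeaves

/-- Head position of a BHT whose span of leaf positions starts at `i`. -/
def BHT.headAt : BHT → ℕ → ℕ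
  | .leaf, i => i
  | .nodeL l _, i => l.headAt i
  | .nodeR l r, i => r.headAt (i + l.numLeaves)

/-- Head position of a BHT placed over positions `0, …, numLeaves - 1`. -/
def BHT.head (T : BHT) : ℕ := T.headAt 0

/-- Arc set of a BHT whose span of leaf positions starts at `i`. -/
def BHT.arcsAt : BHT → ℕ → Set (ℕ × ℕ)
  | .leaf, _ => ∅
  | .nodeL l r, i =>
      insert (l.headAt i, r.headAt (i + l.numLeaves)) (l.arcsAt i ∪ r.arcsAt (i + l.numLeaves))
  | .nodeR l r, i =>
      insert (r.headAt (i + l.numLeaves), l.headAt i) (l.arcsAt i ∪ r.arcsAt (i + l.numLeaves))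

/-- Arc set of a BHT placed over positions `0, …, numLeaves - 1`. -/
def BHT.arcs (T : BHT) : Set (ℕ × ℕ) := T.arcsAt 0

/-- `S` is a subtree of `T` (placed over positions `0, …, numLeaves - 1`) whose
leaf span starts at absolute position `i`. -/
inductive BHT.SubtreeAt : BHT → ℕ → BHT → Prop
  | refl (T : BHT) : BHT.SubtreeAt T 0 T
  | inlL (l r S : BHT) (i : ℕ) : BHT.SubtreeAt l i S → BHT.SubtreeAt (BHT.nodeL l r) i S
  | inrL (l r S : BHT) (i : ℕ) :
      BHT.SubtreeAt r i S → BHT.SubtreeAt (BHT.nodeL l r) (l.numLeaves + i) S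
  | inlR (l r S : BHT) (i : ℕ) : BHT.SubtreeAt l i S → BHT.SubtreeAt (BHT.nodeR l r) i S
  | inrR (l r S : BHT) (i : ℕ) :
      BHT.SubtreeAt r i S → BHT.SubtreeAt (BHT.nodeR l r) (l.numLeaves + i) S

/-- `bht2dep T j = some i` if `i` is the unique position with `(i, j) ∈ arcs T`,
and `none` if `j` has no incoming arc. -/
noncomputable def bht2dep (n : ℕ) (T : BHT) : Fin n → Option (Fin n) := fun j =>
  letI := Classical.dec (∃! i : Fin n, ((i : ℕ), (j : ℕ)) ∈ T.arcs)
  if h : ∃! i : Fin n, ((i : ℕ), (j : ℕ)) ∈ T.arcs then some h.choose else none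

/-- `head` is a dependency tree on `n` words: exactly one root (position with
`head r = none`), and every position reaches the root by iterating `head`. -/
def IsDepTree {n : ℕ} (head : Fin n → Option (Fin n)) : Prop :=
  ∃ r : Fin n, head r = none ∧ (∀ r' : Fin n, head r' = none → r' = r) ∧
    ∀ j : Fin n, Relation.ReflTransGen (fun a b => head a = some b) j r

/-- A dependency tree is projective if every position's set of descendants is an
interval of consecutive positions. -/
def Projective {n : ℕ} (head : Fin n → Option (Fin n)) : Prop :=
  ∀ i : Fin n, ∃ a b : Fin n,
    ∀ j : Fin n, Relation.ReflTransGen (fun x y => head x = some y) j i ↔ (a ≤ j ∧ j ≤ b)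

/-- The six hexatags: `tL`/`tR` are terminal tags (leaf that is a left/right child);
`leftL`/`leftR` are `⇐L`/`⇐R` (internal left child with head-label L/R);
`rightL`/`rightR` are `⇒L`/`⇒R` (internal right child with head-label L/R). -/
inductive Hexatag : Type where
  | tL | tR | leftL | leftR | rightL | rightR
deriving DecidableEq

/-- A hexatag is terminal if it is `tL` or `tR`. -/
def Hexatag.isTerminal : Hexatag → Prop
  | .tL => True
  | .tR => True
  | _ => False

/-- In-order linearization; the Boolean records whether the current subtree is a
right child of its parent (the root counts as a left child by convention). -/
def BHT.hexatagsAux : BHT → Bool → List Hexatag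
  | .leaf, false => [.tL]
  | .leaf, true => [.tR]
  | .nodeL l r, b =>
      l.hexatagsAux false ++ (if b then Hexatag.rightL else Hexatag.leftL) :: r.hexatagsAux true
  | .nodeR l r, b =>
      l.hexatagsAux false ++ (if b then Hexatag.rightR else Hexatag.leftR) :: r.hexatagsAux true

/-- The hexatag linearization of a BHT. -/
def BHT.hexatags (T : BHT) : List Hexatag := T.hexatagsAux false

/-- The tags emitted for the leaves of a BHT, in left-to-right order. -/
def BHT.leafTagsAux : BHT → Bool → List Hexatag
  | .leaf, false => [.tL]
  | .leaf, true => [.tR]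
  | .nodeL l r, _ => l.leafTagsAux false ++ r.leafTagsAux true
  | .nodeR l r, _ => l.leafTagsAux false ++ r.leafTagsAux true

/-- The tags emitted for the leaves of a BHT in left-to-right order (root
counts as a left child by convention). -/
def BHT.leafTags (T : BHT) : List Hexatag := T.leafTagsAux false

/-- Partial BHTs: binary head trees possibly containing a dummy placeholder. -/
inductive PBHT : Type where
  | dummy : PBHT
  | leaf : PBHT
  | nodeL (l r : PBHT) : PBHT
  | nodeR (l r : PBHT) : PBHT
deriving DecidableEq

/-- Does a partial BHT contain a dummy? -/
def PBHT.hasDummy : PBHT → Bool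
  | .dummy => true
  | .leaf => false
  | .nodeL l r => l.hasDummy || r.hasDummy
  | .nodeR l r => l.hasDummy || r.hasDummy

/-- Substitute `u` for the dummy in a partial BHT. -/
def PBHT.subst : PBHT → PBHT → PBHT
  | .dummy, u => u
  | .leaf, _ => .leaf
  | .nodeL l r, u => .nodeL (l.subst u) (r.subst u)
  | .nodeR l r, u => .nodeR (l.subst u) (r.subst u)

/-- One step of the left-corner decoder on a stack of partial BHTs. -/
def hexStep : List PBHT → Hexatag → Option (List PBHT)
  | st, .tL => some (.leaf :: st)
  | t :: st, .tR => if t.hasDummy then some (t.subst .leaf :: st) else none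
  | t :: st, .leftL => some (.nodeL t .dummy :: st)
  | t :: st, .leftR => some (.nodeR t .dummy :: st)
  | t :: u :: st, .rightL =>
      if u.hasDummy then some (u.subst (.nodeL t .dummy) :: st) else none
  | t :: u :: st, .rightR =>
      if u.hasDummy then some (u.subst (.nodeR t .dummy) :: st) else none
  | _, _ => none

/-- The left-corner decoder: run the stack operations; succeed iff every
operation is defined and the final stack is a single dummy-free tree. -/
def tags2bht (τ : List Hexatag) : Option PBHT :=
  match τ.foldlM hexStep ([] : List PBHT) with
  | some [t] => if t.hasDummy then none else some t
  | _ => none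

/-- Embedding of BHTs into partial BHTs. -/
def BHT.toPBHT : BHT → PBHT
  | .leaf => .leaf
  | .nodeL l r => .nodeL l.toPBHT r.toPBHT
  | .nodeR l r => .nodeR l.toPBHT r.toPBHT

/-- Stack-count increment of a hexatag. -/
def Hexatag.delta : Hexatag → ℤ
  | .tL => 1
  | .tR => 0
  | .leftL => 0
  | .leftR => 0
  | .rightL => -1
  | .rightR => -1

/-- Running stack count `sₖ` after the first `k` tags of `τ`. -/
def stackCount (τ : List Hexatag) (k : ℕ) : ℤ :=
  ((τ.take k).map Hexatag.delta).sum

/-- Validity of a hexatag list (0-indexed: Lean index `k` is 1-indexed position `k+1`). -/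
def ValidTags (τ : List Hexatag) : Prop :=
  (τ.length % 2 = 1 ∧
    ∀ k : ℕ, ∀ t : Hexatag, τ[k]? = some t →
      (k % 2 = 0 → t.isTerminal) ∧ (k % 2 = 1 → ¬ t.isTerminal)) ∧
  τ[0]? = some Hexatag.tL ∧
  (∀ k : ℕ, ∀ t : Hexatag, τ[k]? = some t →
    (t = Hexatag.rightL ∨ t = Hexatag.rightR) → 2 ≤ stackCount τ k) ∧
  stackCount τ τ.length = 1

/-- Recursive validity of a suffix: the Boolean is `true` if a terminal is expected next. -/
def VSuf : Bool → ℤ → List Hexatag → Prop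
  | true, _, [] => False
  | true, s, .tL :: τ => VSuf false (s + 1) τ
  | true, s, .tR :: τ => 1 ≤ s ∧ VSuf false s τ
  | true, _, _ :: _ => False
  | false, s, [] => s = 1
  | false, s, .leftL :: τ => VSuf true s τ
  | false, s, .leftR :: τ => VSuf true s τ
  | false, s, .rightL :: τ => 2 ≤ s ∧ VSuf true (s - 1) τ
  | false, s, .rightR :: τ => 2 ≤ s ∧ VSuf true (s - 1) τ
  | false, _, _ :: _ => False

/-- Left-to-right decoder whose stack consists of one-hole contexts. -/
def hexRun : Option BHT → List (BHT → BHT) → List Hexatag → Option BHT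
  | o, _, [] => o
  | none, st, .tL :: τ => hexRun (some .leaf) st τ
  | none, f :: st, .tR :: τ => hexRun (some (f .leaf)) st τ
  | some t, st, .leftL :: τ => hexRun none (BHT.nodeL t :: st) τ
  | some t, st, .leftR :: τ => hexRun none (BHT.nodeR t :: st) τ
  | some t, f :: st, .rightL :: τ => hexRun none ((fun r => f (.nodeL t r)) :: st) τ
  | some t, f :: st, .rightR :: τ => hexRun none ((fun r => f (.nodeR t r)) :: st) τ
  | _, _, _ => none

theorem hexRun_aux (t : BHT) :
    (∀ st rest, hexRun none st (t.hexatagsAux false ++ rest) = hexRun (some t) st rest) ∧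
    (∀ f st rest, hexRun none (f :: st) (t.hexatagsAux true ++ rest)
      = hexRun (some (f t)) st rest) := by
  induction t with
  | leaf => simp [BHT.hexatagsAux, hexRun]
  | nodeL l r ihl ihr =>
    simp [BHT.hexatagsAux, ihl.1, hexRun, ihr.2]
  | nodeR l r ihl ihr =>
    simp [BHT.hexatagsAux, ihl.1, hexRun, ihr.2]

theorem hexRun_hexatags (t : BHT) : hexRun none [] t.hexatags = some t := by
  have := (hexRun_aux t).1 [] []
  simpa [BHT.hexatags, hexRun] using this

theorem VSuf_aux (t : BHT) :
    (∀ s rest, 0 ≤ s → VSuf false (s + 1) rest →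
      VSuf true s (t.hexatagsAux false ++ rest)) ∧
    (∀ s rest, 1 ≤ s → VSuf false s rest → VSuf true s (t.hexatagsAux true ++ rest)) := by
  induction t with
  | leaf =>
    refine ⟨fun s rest _ h => ?_, fun s rest hs h => ?_⟩
    · simpa [BHT.hexatagsAux, VSuf] using h
    · simpa [BHT.hexatagsAux, VSuf] using ⟨hs, h⟩
  | nodeL l r ihl ihr =>
    refine ⟨fun s rest hs h => ?_, fun s rest hs h => ?_⟩
    · simp only [BHT.hexatagsAux, List.append_assoc, List.cons_append]
      exact ihl.1 _ _ hs (ihr.2 _ _ (by omega) h)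
    · simp only [BHT.hexatagsAux, List.append_assoc, List.cons_append]
      refine ihl.1 _ _ (by omega) ⟨by omega, ihr.2 _ _ (by omega) ?_⟩
      simpa using h
  | nodeR l r ihl ihr =>
    refine ⟨fun s rest hs h => ?_, fun s rest hs h => ?_⟩
    · simp only [BHT.hexatagsAux, List.append_assoc, List.cons_append]
      exact ihl.1 _ _ hs (ihr.2 _ _ (by omega) h)
    · simp only [BHT.hexatagsAux, List.append_assoc, List.cons_append]
      refine ihl.1 _ _ (by omega) ⟨by omega, ihr.2 _ _ (by omega) ?_⟩
      simpa using h

/-- `w` is the linearization of a stack of `s` one-hole contexts. -/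
inductive GoodPre : ℤ → List Hexatag → Prop
  | nil : GoodPre 0 []
  | cons (s : ℤ) (w v : List Hexatag) (f : BHT → BHT) : GoodPre s w →
      (∀ t, (f t).hexatagsAux false = v ++ t.hexatagsAux true) → GoodPre (s + 1) (w ++ v)

theorem GoodPre.nonneg {s : ℤ} {w : List Hexatag} (h : GoodPre s w) : 0 ≤ s := by
  induction h with
  | nil => simp
  | cons => omega

theorem GoodPre.inv {s : ℤ} {w : List Hexatag} (h : GoodPre s w) :
    (s = 0 ∧ w = []) ∨ (1 ≤ s ∧ ∃ w' v, ∃ f : BHT → BHT, GoodPre (s - 1) w' ∧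
      (∀ t, (f t).hexatagsAux false = v ++ t.hexatagsAux true) ∧ w = w' ++ v) := by
  cases h with
  | nil => simp
  | cons s w v f h hf =>
    have := h.nonneg
    exact Or.inr ⟨by omega, w, v, f, by simpa using h, hf, rfl⟩

theorem VSuf_surj (τ : List Hexatag) :
    (∀ s w, GoodPre s w → VSuf true s τ → ∃ T : BHT, T.hexatags = w ++ τ) ∧
    (∀ s w (t : BHT), GoodPre (s - 1) w → VSuf false s τ →
      ∃ T : BHT, T.hexatags = w ++ t.hexatagsAux false ++ τ) := by
  induction τ with
  | nil =>
    refine ⟨fun s w _ h => by simp [VSuf] at h, fun s w t hg h => ?_⟩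
    simp only [VSuf] at h
    rcases hg.inv with ⟨_, rfl⟩ | ⟨h1, _⟩
    · exact ⟨t, by simp [BHT.hexatags]⟩
    · omega
  | cons x τ ih =>
    refine ⟨fun s w hg h => ?_, fun s w t hg h => ?_⟩
    · cases x <;> simp only [VSuf] at h
      · obtain ⟨T, hT⟩ := ih.2 (s + 1) w .leaf (by simpa using hg) h
        exact ⟨T, by simpa [BHT.hexatagsAux] using hT⟩
      · rcases hg.inv with ⟨h0, _⟩ | ⟨_, w', v, f, hg', hf, rfl⟩
        · omega
        · obtain ⟨T, hT⟩ := ih.2 s w' (f .leaf) hg' h.2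
          exact ⟨T, by simpa [hf, BHT.hexatagsAux] using hT⟩
    · cases x <;> simp only [VSuf] at h
      · have := GoodPre.cons _ w (t.hexatagsAux false ++ [.leftL]) (BHT.nodeL t) hg
          (by intro t; simp [BHT.hexatagsAux])
        obtain ⟨T, hT⟩ := ih.1 s _ (by simpa using this) h
        exact ⟨T, by simpa using hT⟩
      · have := GoodPre.cons _ w (t.hexatagsAux false ++ [.leftR]) (BHT.nodeR t) hg
          (by intro t; simp [BHT.hexatagsAux])
        obtain ⟨T, hT⟩ := ih.1 s _ (by simpa using this) h
        exact ⟨T, by simpa using hT⟩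
      · rcases hg.inv with ⟨h0, _⟩ | ⟨_, w', v, f, hg', hf, rfl⟩
        · omega
        · have := GoodPre.cons _ w' (v ++ t.hexatagsAux false ++ [.rightL])
            (fun r => f (BHT.nodeL t r)) hg' (by intro t; simp [hf, BHT.hexatagsAux])
          obtain ⟨T, hT⟩ := ih.1 (s - 1) _ (by simpa using this) h.2
          exact ⟨T, by simpa using hT⟩
      · rcases hg.inv with ⟨h0, _⟩ | ⟨_, w', v, f, hg', hf, rfl⟩
        · omega
        · have := GoodPre.cons _ w' (v ++ t.hexatagsAux false ++ [.rightR])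
            (fun r => f (BHT.nodeR t r)) hg' (by intro t; simp [hf, BHT.hexatagsAux])
          obtain ⟨T, hT⟩ := ih.1 (s - 1) _ (by simpa using this) h.2
          exact ⟨T, by simpa using hT⟩

/-- Index-based validity of a suffix starting at parity `p` and height `s`. -/
def GenValid (p : ℕ) (s : ℤ) (τ : List Hexatag) : Prop :=
  (τ.length + p) % 2 = 1 ∧
  (∀ k : ℕ, ∀ t : Hexatag, τ[k]? = some t →
      ((k + p) % 2 = 0 → t.isTerminal) ∧ ((k + p) % 2 = 1 → ¬ t.isTerminal)) ∧
  (∀ k : ℕ, ∀ t : Hexatag, τ[k]? = some t →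
    (t = Hexatag.rightL ∨ t = Hexatag.rightR) → 2 ≤ s + stackCount τ k) ∧
  s + stackCount τ τ.length = 1

theorem GenValid_cons (p : ℕ) (s : ℤ) (x : Hexatag) (τ : List Hexatag) :
    GenValid p s (x :: τ) ↔ ((p % 2 = 0 → x.isTerminal) ∧ (p % 2 = 1 → ¬ x.isTerminal)) ∧
      ((x = Hexatag.rightL ∨ x = Hexatag.rightR) → 2 ≤ s) ∧
      GenValid (p + 1) (s + x.delta) τ := by
  have hsc : ∀ k, stackCount (x :: τ) (k + 1) = x.delta + stackCount τ k := by
    intro k; simp [stackCount]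
  have hs0 : stackCount (x :: τ) 0 = 0 := by simp [stackCount]
  have e : ∀ k, k + 1 + p = k + (p + 1) := by intro k; omega
  unfold GenValid
  constructor
  · rintro ⟨h1, h2, h3, h4⟩
    refine ⟨by simpa using h2 0 x, ?_, ?_, ?_, ?_, ?_⟩
    · have := h3 0 x (by simp)
      simpa [hs0] using this
    · rw [List.length_cons, e] at h1; exact h1
    · intro k t ht
      have := h2 (k + 1) t (by simpa using ht)
      rwa [e] at this
    · intro k t ht hr
      have := h3 (k + 1) t (by simpa using ht) hr
      rw [hsc] at this; omega
    · rw [List.length_cons, hsc] at h4; omega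
  · rintro ⟨h1, h2, h3, h4, h5, h6⟩
    refine ⟨by rw [List.length_cons, e]; exact h3, ?_, ?_, ?_⟩
    · rintro (_ | k) t ht
      · obtain rfl : x = t := by simpa using ht
        simpa using h1
      · rw [e]; exact h4 k t (by simpa using ht)
    · rintro (_ | k) t ht hr
      · obtain rfl : x = t := by simpa using ht
        simpa [hs0] using h2 hr
      · have := h5 k t (by simpa using ht) hr
        rw [hsc]; omega
    · rw [List.length_cons, hsc]; omega

theorem GenValid_iff (τ : List Hexatag) : ∀ (p : ℕ) (s : ℤ), 1 ≤ s →
    (GenValid p s τ ↔ VSuf (decide (p % 2 = 0)) s τ) := by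
  induction τ with
  | nil =>
    intro p s hs
    rcases Nat.mod_two_eq_zero_or_one p with hp | hp <;>
      simp [GenValid, VSuf, hp, stackCount]
  | cons x τ ih =>
    intro p s hs
    rw [GenValid_cons]
    rcases Nat.mod_two_eq_zero_or_one p with hp | hp
    · have hq : (p + 1) % 2 = 1 := by omega
      cases x <;> simp [hp, VSuf, Hexatag.isTerminal, Hexatag.delta]
      · rw [ih _ _ (by omega)]; simp [hq]
      · rw [ih _ _ (by omega)]; simp [hq, hs]
    · have hq : (p + 1) % 2 = 0 := by omega
      cases x <;> simp [hp, VSuf, Hexatag.isTerminal, Hexatag.delta]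
      · rw [ih _ _ (by omega)]; simp [hq]
      · rw [ih _ _ (by omega)]; simp [hq]
      · intro h2
        rw [ih _ _ (by omega)]; simp [hq, sub_eq_add_neg]
      · intro h2
        rw [ih _ _ (by omega)]; simp [hq, sub_eq_add_neg]

theorem ValidTags_iff (τ : List Hexatag) : ValidTags τ ↔ VSuf true 0 τ := by
  have h : ValidTags τ ↔ τ[0]? = some Hexatag.tL ∧ GenValid 0 0 τ := by
    simp only [ValidTags, GenValid, Nat.add_zero, zero_add]
    tauto
  rw [h]
  cases τ with
  | nil => simp [VSuf]
  | cons x τ =>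
    rw [GenValid_cons]
    cases x <;> simp [VSuf, Hexatag.isTerminal, Hexatag.delta]
    rw [GenValid_iff _ _ _ (by omega)]; simp

theorem hexatagsAux_length (t : BHT) : ∀ b, (t.hexatagsAux b).length + 1 = 2 * t.numLeaves := by
  induction t with
  | leaf => intro b; cases b <;> simp [BHT.hexatagsAux, BHT.numLeaves]
  | nodeL l r ihl ihr =>
    intro b
    have := ihl false
    have := ihr true
    simp [BHT.hexatagsAux, BHT.numLeaves]; omega
  | nodeR l r ihl ihr =>
    intro b
    have := ihl false
    have := ihr true
    simp [BHT.hexatagsAux, BHT.numLeaves]; omega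

theorem hexatags_bijOn_valid (n : ℕ) (hn : 1 ≤ n) :
    Set.BijOn BHT.hexatags {T : BHT | T.numLeaves = n}
      {τ : List Hexatag | τ.length = 2 * n - 1 ∧ ValidTags τ} := by
  have hlen : ∀ T : BHT, T.hexatags.length + 1 = 2 * T.numLeaves :=
    fun T => hexatagsAux_length T false
  refine ⟨?_, ?_, ?_⟩
  · intro T hT
    simp only [Set.mem_setOf_eq] at hT ⊢
    have := hlen T
    refine ⟨by omega, (ValidTags_iff _).2 ?_⟩
    have := (VSuf_aux T).1 0 [] le_rfl (by simp [VSuf])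
    simpa [BHT.hexatags] using this
  · intro T _ T' _ h
    have h1 := hexRun_hexatags T
    have h2 := hexRun_hexatags T'
    simp only [h] at h1
    simpa [h1] using h2
  · rintro τ ⟨hl, hv⟩
    obtain ⟨T, hT⟩ := (VSuf_surj τ).1 0 [] .nil ((ValidTags_iff _).1 hv)
    simp only [List.nil_append] at hT
    refine ⟨T, ?_, hT⟩
    have := hlen T
    rw [hT] at this
    simp only [Set.mem_setOf_eq]
    omega
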